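/- arXiv:2403.00680 — 2 statements merged into one kernel-verified Lean document; each statement's English description precedes it below -/
import Mathlib

section
/- Let n, m ≥ 3 be integers and κ ≥ 4. There is an absolute constant C > 0 with the following property. Let β_1,…,β_n ∈ ℝ² and Y ∈ {−1,1}^{m×n}. For i ∈ [m] let X_{(i)} ∈ ℝ^{n×2} have rows x_j = −Y_{ij}·β_jᵀ, let X'_{(i)} consist of the rows with Y_{ij} = −1 and X''_{(i)} of the rows with Y_{ij} = 1. Let μ ≥ 1 and ε ∈ (0,1/4). Assume for each i that X'_{(i)} and X''_{(i)} are each μ-complex in both the ℓ₀ and ℓ₁ sense, and that ‖X'_{(i)}η‖₁ ≤ 2μ·‖X''_{(i)}η‖₁ and ‖X''_{(i)}η‖₁ ≤ 2μ·‖X'_{(i)}η‖₁ for all η ∈ ℝ². Set E = ln κ. Then there exists a nonnegative weight vector w ∈ ℝ^n whose support has size at most C·(1+E)·κ·(μ⁴·√n/ε³)·((log n)² + log m), such that for every i ∈ [m], every α ∈ ℝ² and every c ∈ [1/κ, 1/2): |∑_{j: Y_{ij}=−1} w_j·g_c(x_j·α) + ∑_{j: Y_{ij}=1} w_j·h_c(x_j·α)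 − L_i(α,c)| ≤ ε·L_i(α,c), where L_i(α,c) = ∑_{j: Y_{ij}=−1} g_c(x_j·α) + ∑_{j: Y_{ij}=1} h_c(x_j·α). -/
/-!
An Auerbach basis of `{(β_j · α)_j : α ∈ ℝᵈ}` with the `ℓ₁` norm bounds the sensitivities of the
rows, and so yields a distribution `p` with `1 / n ≤ (d + 1) p_j` and
`|β_j · α| ≤ (d + 1) p_j ∑_i |β_i · α|` for all `α`. Sample rows from `p` and weight them by inverse
probabilities. By Hoeffding's inequality and a union bound over the polynomially many traces of
halfspaces (Sauer–Shelah), the sample estimates the `q`-mass of every set `{j : t q_j ≤ β_j · α}` up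
to an additive error `δ`, both for `q = p` and for the uniform `q = 1 / n`.

The layer-cake formula extends this accuracy to every loss whose superlevel sets are of that form.
This covers `h_c`, which is antitone with values in `[0, ln κ]`, and the pieces of `g_c`: the
positive part, two monotone functions with values in `[0, ln 2]` and a constant. As these sets do
not involve `c`, the union bound does not see the guessing parameter.

The resulting additive error is `δ ((d + 1) ∑_j |β_j · α| + (3 + ln κ) n)`. Complexity makes it
relative: in the `ℓ₀` sense it gives `n ≤ 8 μ L_i(α, c)`, and in the `ℓ₁` sense, with the balance
condition, `∑_j |β_j · α| ≤ 6 μ² L_i(α, c)`. Hence `δ` of order `ε / (μ² (1 + ln κ))` suffices.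
-/

open Finset Matrix

/-- `g_c(z) = ln(1+e^z) - ln(1-c)`. -/
noncomputable def gfun (c z : ℝ) : ℝ := Real.log (1 + Real.exp z) - Real.log (1 - c)

/-- `h_c(z) = -ln(c + (1-c)/(1+e^{-z}))`. -/
noncomputable def hfun (c z : ℝ) : ℝ := -Real.log (c + (1 - c) / (1 + Real.exp (-z)))

/-- The submatrix of `x` with rows indexed by `s` is `μ`-complex in the ℓ₁ sense. -/
def Mu1ComplexOn {N d : ℕ} (x : Fin N → Fin d → ℝ) (s : Finset (Fin N)) (μ : ℝ) : Prop :=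
  ∀ η : Fin d → ℝ,
    ∑ j ∈ s.filter (fun j => 0 ≤ x j ⬝ᵥ η), x j ⬝ᵥ η ≤
      μ * ∑ j ∈ s.filter (fun j => x j ⬝ᵥ η < 0), |x j ⬝ᵥ η|

/-- The submatrix of `x` with rows indexed by `s` is `μ`-complex in the ℓ₀ sense. -/
def Mu0ComplexOn {N d : ℕ} (x : Fin N → Fin d → ℝ) (s : Finset (Fin N)) (μ : ℝ) : Prop :=
  ∀ η : Fin d → ℝ, η ≠ 0 →
    ((s.filter (fun j => 0 ≤ x j ⬝ᵥ η)).card : ℝ) ≤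
      μ * ((s.filter (fun j => x j ⬝ᵥ η < 0)).card : ℝ)

section LayerCake

variable {ι : Type*} {s : Finset ι}

lemma abs_sum_mul_le_of_forall_superlevel {D f : ι → ℝ} {M δ : ℝ} (hM : 0 ≤ M)
    (hf : ∀ j ∈ s, f j ∈ Set.Icc 0 M) (hδ : ∀ t, |∑ j ∈ s with t ≤ f j, D j| ≤ δ) :
    |∑ j ∈ s, D j * f j| ≤ M * δ := by
  have hlevel (j) (hj : j ∈ s) :
      ∫ t in 0..M, Set.indicator {t | t ≤ f j} (fun _ => D j) t = D j * f j := by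
    rw [intervalIntegral.integral_indicator (hf j hj)]
    simp [mul_comm]
  have hlayer : ∑ j ∈ s, D j * f j =
      ∫ t in 0..M, ∑ j ∈ s, Set.indicator {t | t ≤ f j} (fun _ => D j) t := by
    rw [intervalIntegral.integral_finsetSum, sum_congr rfl hlevel]
    intro j _
    rw [intervalIntegrable_iff, Set.uIoc_of_le hM]
    exact (MeasureTheory.integrable_const _).indicator measurableSet_Iic
  have hbound (t : ℝ) : ‖∑ j ∈ s, Set.indicator {t | t ≤ f j} (fun _ => D j) t‖ ≤ δ := by
    simpa [Set.indicator_apply, sum_filter] using hδ t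
  rw [hlayer, ← Real.norm_eq_abs]
  refine (intervalIntegral.norm_integral_le_of_norm_le_const fun t _ => hbound t).trans_eq ?_
  rw [sub_zero, abs_of_nonneg hM, mul_comm]

lemma exists_forall_le_comp_iff_le {φ : ℝ → ℝ} (hφ : Monotone φ) (s : Finset ι) (y : ι → ℝ)
    (t : ℝ) : ∃ τ : ℝ, ∀ j ∈ s, t ≤ φ (y j) ↔ τ ≤ y j := by
  rcases (s.filter fun j => t ≤ φ (y j)).eq_empty_or_nonempty with hempty | hne
  · obtain ⟨B, hB⟩ := (s.image y).bddAbove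
    refine ⟨B + 1, fun j hj => iff_of_false (filter_eq_empty_iff.1 hempty hj) ?_⟩
    exact ((hB (mem_coe.2 (mem_image_of_mem y hj))).trans_lt (lt_add_one B)).not_ge
  · obtain ⟨k, hk, hmin⟩ := exists_min_image _ y hne
    exact ⟨y k, fun j hj => ⟨fun ht => hmin j (mem_filter.2 ⟨hj, ht⟩),
      fun hle => (mem_filter.1 hk).2.trans (hφ hle)⟩⟩

end LayerCake

section Halfspaces

variable {ι : Type*} {d : ℕ}

lemma exists_sum_smul_eq_zero_of_lt_card {s : Finset ι} (a : ι → Fin d → ℝ)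
    (hs : d < #s) : ∃ g : ι → ℝ, ∑ j ∈ s, g j • a j = 0 ∧ ∃ i ∈ s, g i < 0 := by
  have hdep : ¬LinearIndepOn ℝ a ↑s := fun hindep => by
    have hle := hindep.fintype_card_le_finrank
    simp only [coe_sort_coe, Fintype.card_coe, Module.finrank_fin_fun] at hle
    exact hs.not_ge hle
  obtain ⟨g, hg, i, hi, hgi⟩ := not_linearIndepOn_finset_iff.1 hdep
  rcases hgi.lt_or_gt with hneg | hpos
  · exact ⟨g, hg, i, hi, hneg⟩
  · exact ⟨-g, by simp [hg], i, hi, by simpa using hpos⟩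

variable [Fintype ι]

/-- The subsets of the index set cut out of the points `a j` by closed homogeneous halfspaces. -/
noncomputable def halfspaceTraces (a : ι → Fin d → ℝ) : Finset (Finset ι) :=
  (Set.toFinite (Set.range fun v : Fin d → ℝ => ({j | 0 ≤ a j ⬝ᵥ v} : Finset ι))).toFinset

lemma mem_halfspaceTraces {a : ι → Fin d → ℝ} {A : Finset ι} :
    A ∈ halfspaceTraces a ↔ ∃ v, ({j | 0 ≤ a j ⬝ᵥ v} : Finset ι) = A := by
  simp [halfspaceTraces]

-- A linear relation among the points is contradicted by pairing it with the normal vector of the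
-- halfspace that cuts out its nonnegative coefficients.
lemma card_le_of_shatters_halfspaceTraces [DecidableEq ι] {a : ι → Fin d → ℝ} {s : Finset ι}
    (hs : (halfspaceTraces a).Shatters s) : #s ≤ d := by
  by_contra! hlt
  obtain ⟨g, hrel, i, hi, hgi⟩ := exists_sum_smul_eq_zero_of_lt_card a hlt
  obtain ⟨A, hA, hcut⟩ := hs (filter_subset (fun j => 0 ≤ g j) s)
  obtain ⟨v, rfl⟩ := mem_halfspaceTraces.1 hA
  have hsign {j} (hj : j ∈ s) : 0 ≤ a j ⬝ᵥ v ↔ 0 ≤ g j := by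
    simpa [hj] using Finset.ext_iff.1 hcut j
  have hpairing : ∑ j ∈ s, g j * (a j ⬝ᵥ v) = 0 := by
    simpa [sum_dotProduct] using congrArg (· ⬝ᵥ v) hrel
  refine hpairing.not_gt (sum_pos' (fun j hj => ?_) ⟨i, hi, ?_⟩)
  · rcases le_or_gt 0 (g j) with hg | hg
    · exact mul_nonneg hg ((hsign hj).2 hg)
    · exact mul_nonneg_of_nonpos_of_nonpos hg.le (not_le.1 (mt (hsign hj).1 hg.not_ge)).le
  · exact mul_pos_of_neg_of_neg hgi (not_le.1 (mt (hsign hi).1 hgi.not_ge))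

lemma card_halfspaceTraces_le [Nonempty ι] (a : ι → Fin d → ℝ) :
    #(halfspaceTraces a) ≤ (d + 1) * Fintype.card ι ^ d := by
  classical
  have hvc : (halfspaceTraces a).vcDim ≤ d :=
    Finset.sup_le fun s hs => card_le_of_shatters_halfspaceTraces (mem_shatterer.1 hs)
  calc #(halfspaceTraces a) ≤ #(halfspaceTraces a).shatterer := card_le_card_shatterer _
    _ ≤ ∑ k ∈ Iic (halfspaceTraces a).vcDim, (Fintype.card ι).choose k :=
      card_shatterer_le_sum_vcDim
    _ ≤ ∑ k ∈ Iic d, (Fintype.card ι).choose k :=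
      sum_le_sum_of_subset (Iic_subset_Iic.2 hvc)
    _ ≤ ∑ _k ∈ Iic d, Fintype.card ι ^ d := sum_le_sum fun k hk =>
      (Nat.choose_le_pow _ k).trans (Nat.pow_le_pow_right Fintype.card_pos (mem_Iic.1 hk))
    _ = (d + 1) * Fintype.card ι ^ d := by simp

end Halfspaces

section Sampling

open MeasureTheory ProbabilityTheory

variable {Ω : Type*} [MeasurableSpace Ω] (P : Measure Ω) [IsProbabilityMeasure P] {a b : ℝ}

lemma measureReal_pi_le_sum_sub_integral_le {X : Ω → ℝ} (hX : Measurable X)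
    (hab : ∀ ω, X ω ∈ Set.Icc a b) (k : ℕ) {δ : ℝ} (hδ : 0 ≤ δ) :
    (Measure.pi fun _ : Fin k => P).real {J | k * δ ≤ ∑ l, (X (J l) - P[X])} ≤
      Real.exp (-(2 * k * δ ^ 2 / (b - a) ^ 2)) := by
  have hindep : iIndepFun (fun (l : Fin k) (J : Fin k → Ω) => X (J l) - P[X])
      (Measure.pi fun _ : Fin k => P) :=
    iIndepFun_pi (X := fun _ ω => X ω - P[X]) fun _ => (hX.sub_const _).aemeasurable
  have hsubG (l : Fin k) : HasSubgaussianMGF (fun J : Fin k → Ω => X (J l) - P[X])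
      ((‖b - a‖₊ / 2) ^ 2) (Measure.pi fun _ : Fin k => P) := by
    have hmap := measurePreserving_eval (fun _ : Fin k => P) l
    refine HasSubgaussianMGF.of_map hmap.aemeasurable (X := fun ω => X ω - P[X]) ?_
    rw [hmap.map_eq]
    exact hasSubgaussianMGF_of_mem_Icc hX.aemeasurable (.of_forall hab)
  have hvar : ((∑ _l : Fin k, (‖b - a‖₊ / 2) ^ 2 : NNReal) : ℝ) = k * (b - a) ^ 2 / 4 := by
    rw [sum_const, card_univ, Fintype.card_fin, nsmul_eq_mul]
    push_cast
    rw [Real.norm_eq_abs, div_pow, sq_abs]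
    ring
  refine (HasSubgaussianMGF.measure_sum_ge_le_of_iIndepFun hindep (fun l _ => hsubG l)
    (by positivity : 0 ≤ k * δ)).trans_eq ?_
  rw [hvar]
  generalize b - a = width
  rcases eq_or_ne k 0 with rfl | _
  · simp
  · field_simp
    ring_nf

lemma measureReal_pi_le_abs_sum_sub_integral_le {X : Ω → ℝ} (hX : Measurable X)
    (hab : ∀ ω, X ω ∈ Set.Icc a b) (k : ℕ) {δ : ℝ} (hδ : 0 ≤ δ) :
    (Measure.pi fun _ : Fin k => P).real {J | k * δ ≤ |∑ l, (X (J l) - P[X])|} ≤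
      2 * Real.exp (-(2 * k * δ ^ 2 / (b - a) ^ 2)) := by
  have hupper := measureReal_pi_le_sum_sub_integral_le P hX hab k hδ
  have hlower := measureReal_pi_le_sum_sub_integral_le P (a := -b) (b := -a) hX.neg
    (fun ω => ⟨neg_le_neg (hab ω).2, neg_le_neg (hab ω).1⟩) k hδ
  rw [neg_sub_neg] at hlower
  simp only [Pi.neg_apply, integral_neg, neg_sub_neg] at hlower
  simp only [le_abs, ← Finset.sum_neg_distrib, neg_sub, Set.ofPred_or]
  linarith [measureReal_union_le (μ := Measure.pi fun _ : Fin k => P)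
    {J | k * δ ≤ ∑ l, (X (J l) - P[X])} {J | k * δ ≤ ∑ l, (P[X] - X (J l))}]

lemma exists_sample_forall_abs_sum_sub_integral_lt {I : Type*} [Fintype I] {X : I → Ω → ℝ}
    (hX : ∀ e, Measurable (X e)) (hab : ∀ e ω, X e ω ∈ Set.Icc a b) {k : ℕ} {δ : ℝ} (hδ : 0 ≤ δ)
    (hk : 2 * Fintype.card I < Real.exp (2 * k * δ ^ 2 / (b - a) ^ 2)) :
    ∃ J : Fin k → Ω, ∀ e, |∑ l, (X e (J l) - P[X e])| < k * δ := by
  set bad : I → Set (Fin k → Ω) := fun e => {J | k * δ ≤ |∑ l, (X e (J l) - P[X e])|}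
  have hbad : (Measure.pi fun _ : Fin k => P).real (⋃ e, bad e) < 1 := calc
    _ ≤ ∑ e, (Measure.pi fun _ : Fin k => P).real (bad e) := measureReal_iUnion_fintype_le _
    _ ≤ ∑ _e : I, 2 * Real.exp (-(2 * k * δ ^ 2 / (b - a) ^ 2)) :=
      Finset.sum_le_sum fun e _ => measureReal_pi_le_abs_sum_sub_integral_le P (hX e) (hab e) k hδ
    _ = 2 * Fintype.card I * Real.exp (-(2 * k * δ ^ 2 / (b - a) ^ 2)) := by
      rw [sum_const, card_univ, nsmul_eq_mul]; ring
    _ < 1 := by rwa [Real.exp_neg, ← div_eq_mul_inv, div_lt_one (Real.exp_pos _)]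
  obtain ⟨J, hJ⟩ : ∃ J, J ∉ ⋃ e, bad e := by
    by_contra! hall
    rw [Set.eq_univ_of_forall hall, probReal_univ] at hbad
    exact lt_irrefl _ hbad
  exact ⟨J, by simpa [bad] using hJ⟩

end Sampling

section ImportanceSampling

open MeasureTheory ProbabilityTheory

variable {ι : Type*}

lemma exists_measure_integral_eq_sum_mul [Fintype ι] [MeasurableSpace ι]
    [MeasurableSingletonClass ι] {p : ι → ℝ} (hp : p ∈ stdSimplex ℝ ι) :
    ∃ P : Measure ι, IsProbabilityMeasure P ∧ ∀ f : ι → ℝ, ∫ j, f j ∂P = ∑ j, p j * f j := by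
  have hsum : ∑ j, ENNReal.ofReal (p j) = 1 := by
    rw [← ENNReal.ofReal_sum_of_nonneg fun j _ => hp.1 j, hp.2, ENNReal.ofReal_one]
  refine ⟨(PMF.ofFintype _ hsum).toMeasure, inferInstance, fun f => ?_⟩
  simp [PMF.integral_eq_sum, ENNReal.toReal_ofReal (hp.1 _)]

/-- The importance weights of a sample `J` of size `k` drawn from the distribution `p`: they make
`∑ j, importanceWeights p J j * f j` the unbiased estimator of `∑ j, f j`. -/
noncomputable def importanceWeights [DecidableEq ι] {k : ℕ} (p : ι → ℝ) (J : Fin k → ι) (j : ι) :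
    ℝ :=
  #{l | J l = j} / (k * p j)

section ImportanceWeights

variable [DecidableEq ι] {k : ℕ} {p : ι → ℝ} {J : Fin k → ι}

lemma importanceWeights_nonneg (hp : ∀ j, 0 ≤ p j) (j : ι) : 0 ≤ importanceWeights p J j :=
  div_nonneg (Nat.cast_nonneg _) (mul_nonneg (Nat.cast_nonneg _) (hp j))

variable [Fintype ι]

lemma card_importanceWeights_ne_zero_le : #{j | importanceWeights p J j ≠ 0} ≤ k := by
  have hsub : ({j | importanceWeights p J j ≠ 0} : Finset ι) ⊆ univ.image J := fun j hj => by
    simp only [importanceWeights, ne_eq, mem_filter_univ, div_eq_zero_iff, Nat.cast_eq_zero,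
      card_eq_zero, filter_eq_empty_iff, mem_univ, forall_const, not_or, not_forall,
      not_not] at hj
    simpa using hj.1
  simpa using (card_le_card hsub).trans card_image_le

lemma sum_importanceWeights_mul (f : ι → ℝ) :
    ∑ j, importanceWeights p J j * f j = (∑ l, f (J l) / p (J l)) / k := by
  calc ∑ j, importanceWeights p J j * f j
      = ∑ j, ∑ l with J l = j, f (J l) / p (J l) / k := by
        refine sum_congr rfl fun j _ => ?_
        rw [sum_congr rfl fun l hl => by rw [(mem_filter.1 hl).2], sum_const, nsmul_eq_mul,
          importanceWeights]
        ring
    _ = (∑ l, f (J l) / p (J l)) / k := by rw [sum_fiberwise, sum_div]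

end ImportanceWeights

lemma exists_weights_forall_abs_sum_sub_one_mul_le [Fintype ι] {I : Type*} [Fintype I] {k : ℕ}
    {p : ι → ℝ} (hp : p ∈ stdSimplex ℝ ι) {f : I → ι → ℝ} {K : ℝ} (hK : 0 ≤ K)
    (hf : ∀ e j, f e j ∈ Set.Icc 0 (K * p j)) {δ : ℝ} (hδ : 0 ≤ δ)
    (hk : 2 * Fintype.card I < Real.exp (2 * k * δ ^ 2 / K ^ 2)) :
    ∃ w : ι → ℝ, (∀ j, 0 ≤ w j) ∧ #{j | w j ≠ 0} ≤ k ∧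
      ∀ e, |∑ j, (w j - 1) * f e j| ≤ δ := by
  classical
  let _ : MeasurableSpace ι := ⊤
  obtain ⟨P, _, hP⟩ := exists_measure_integral_eq_sum_mul hp
  have hmean (e) : ∫ j, f e j / p j ∂P = ∑ j, f e j := by
    rw [hP]
    refine sum_congr rfl fun j _ => mul_div_cancel_of_imp' fun hpj => ?_
    simpa [hpj] using hf e j
  have hratio (e j) : f e j / p j ∈ Set.Icc 0 K :=
    ⟨div_nonneg (hf e j).1 (hp.1 j), div_le_of_le_mul₀ (hp.1 j) hK (hf e j).2⟩
  obtain ⟨J, hJ⟩ := exists_sample_forall_abs_sum_sub_integral_lt P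
    (X := fun e j => f e j / p j) (fun _ => measurable_from_top) hratio hδ (by simpa using hk)
  refine ⟨importanceWeights p J, importanceWeights_nonneg hp.1,
    card_importanceWeights_ne_zero_le, fun e => ?_⟩
  have hkpos : (0 : ℝ) < k :=
    (Nat.cast_nonneg k).lt_of_ne fun hk0 => by simpa [← hk0, (abs_nonneg _).not_gt] using hJ e
  have hdev : ∑ j, (importanceWeights p J j - 1) * f e j =
      (∑ l, (f e (J l) / p (J l) - ∫ j, f e j / p j ∂P)) / k := by
    simp only [sub_one_mul, sum_sub_distrib, sum_importanceWeights_mul, hmean, sum_const,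
      card_univ, Fintype.card_fin, nsmul_eq_mul]
    field_simp
  rw [hdev, abs_div, abs_of_pos hkpos, div_le_iff₀ hkpos, mul_comm]
  exact (hJ e).le

end ImportanceSampling

section HalfspaceAccuracy

variable {ι : Type*} {d : ℕ}

/-- The weights `w` estimate the `q`-mass of the rows in `s` satisfying `t * q j ≤ β j ⬝ᵥ α` up to
an additive error `δ`, for all directions `α` and thresholds `t`. Scaling the threshold by `q` makes
these rows the trace of a homogeneous halfspace on the points `(q j, β j)`. -/
def IsHalfspaceAccurate (β : ι → Fin d → ℝ) (q : ι → ℝ) (s : Finset ι) (w : ι → ℝ) (δ : ℝ) :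
    Prop :=
  ∀ (α : Fin d → ℝ) (t : ℝ), |∑ j ∈ s with t * q j ≤ β j ⬝ᵥ α, (w j - 1) * q j| ≤ δ

lemma exists_weights_isHalfspaceAccurate [Fintype ι] {p : ι → ℝ} (hp : p ∈ stdSimplex ℝ ι)
    (β : ι → Fin d → ℝ) {I : Type*} [Fintype I] {q : I → ι → ℝ} (s : I → Finset ι) {K : ℝ}
    (hK : 0 ≤ K) (hq : ∀ e j, q e j ∈ Set.Icc 0 (K * p j)) {k : ℕ} {δ : ℝ} (hδ : 0 ≤ δ)
    (hk : 2 * (Fintype.card I * ((d + 2) * Fintype.card ι ^ (d + 1) : ℝ)) <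
      Real.exp (2 * k * δ ^ 2 / K ^ 2)) :
    ∃ w : ι → ℝ, (∀ j, 0 ≤ w j) ∧ #{j | w j ≠ 0} ≤ k ∧
      ∀ e, IsHalfspaceAccurate β (q e) (s e) w δ := by
  classical
  have : Nonempty ι := by
    by_contra! hempty
    simpa using hp.2
  set a : I → ι → Fin (d + 1) → ℝ := fun e j => vecCons (q e j) (β j)
  have hcard : Fintype.card (Σ e, halfspaceTraces (a e)) ≤
      Fintype.card I * ((d + 2) * Fintype.card ι ^ (d + 1)) := by
    rw [Fintype.card_sigma, ← smul_eq_mul (Fintype.card I), ← card_univ]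
    exact sum_le_card_nsmul _ _ _ fun e _ => by simpa using card_halfspaceTraces_le (a e)
  have hmem (e : Σ e, halfspaceTraces (a e)) (j) :
      (if j ∈ s e.1 ∩ e.2 then q e.1 j else 0) ∈ Set.Icc 0 (K * p j) := by
    split_ifs
    · exact hq _ _
    · exact ⟨le_rfl, mul_nonneg hK (hp.1 j)⟩
  obtain ⟨w, hw, hsupp, hacc⟩ := exists_weights_forall_abs_sum_sub_one_mul_le (k := k) hp hK hmem hδ
    (hk.trans_le' (by gcongr; exact_mod_cast hcard))
  refine ⟨w, hw, hsupp, fun e α t => ?_⟩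
  have hmass := hacc ⟨e, _, mem_halfspaceTraces.2 ⟨vecCons (-t) α, rfl⟩⟩
  simp only [mul_ite, mul_zero, ← sum_filter] at hmass
  convert hmass using 3
  ext j
  simp [a, mul_comm t]

namespace IsHalfspaceAccurate

variable {β : ι → Fin d → ℝ} {q : ι → ℝ} {s : Finset ι} {w : ι → ℝ} {δ : ℝ}

lemma abs_sum_sub_one_mul_le (hw : IsHalfspaceAccurate β q s w δ) (hq : ∀ j ∈ s, 0 < q j)
    {f : ι → ℝ} {M : ℝ} (hM : 0 ≤ M) (hf : ∀ j ∈ s, f j ∈ Set.Icc 0 (M * q j))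
    (hlevel : ∀ t, ∃ α τ, ∀ j ∈ s, t * q j ≤ f j ↔ τ * q j ≤ β j ⬝ᵥ α) :
    |∑ j ∈ s, (w j - 1) * f j| ≤ M * δ := by
  have hratio (j) (hj : j ∈ s) : f j / q j ∈ Set.Icc 0 M :=
    ⟨div_nonneg (hf j hj).1 (hq j hj).le, (div_le_iff₀ (hq j hj)).2 (hf j hj).2⟩
  have hsum : ∑ j ∈ s, (w j - 1) * f j = ∑ j ∈ s, (w j - 1) * q j * (f j / q j) :=
    sum_congr rfl fun j hj => by field_simp [(hq j hj).ne']
  rw [hsum]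
  refine abs_sum_mul_le_of_forall_superlevel hM hratio fun t => ?_
  obtain ⟨α, τ, hα⟩ := hlevel t
  rw [filter_congr fun j hj => (le_div_iff₀ (hq j hj)).trans (hα j hj)]
  exact hw α τ

lemma abs_sum_sub_one_mul_posPart_le (hw : IsHalfspaceAccurate β q s w δ)
    (hq : ∀ j ∈ s, 0 < q j) {α : Fin d → ℝ} {M : ℝ} (hM : 0 ≤ M)
    (hα : ∀ j ∈ s, |β j ⬝ᵥ α| ≤ M * q j) :
    |∑ j ∈ s, (w j - 1) * max (β j ⬝ᵥ α) 0| ≤ M * δ := by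
  refine hw.abs_sum_sub_one_mul_le hq hM (fun j hj => ⟨le_max_right _ _, ?_⟩) fun t => ?_
  · exact (max_le (le_abs_self _) (abs_nonneg _)).trans (hα j hj)
  · rcases le_or_gt t 0 with ht | ht
    · refine ⟨0, 0, fun j hj => iff_of_true ?_ (by simp)⟩
      exact (mul_nonpos_of_nonpos_of_nonneg ht (hq j hj).le).trans (le_max_right _ _)
    · exact ⟨α, t, fun j hj => by simp [(mul_pos ht (hq j hj)).not_ge]⟩

lemma abs_sum_sub_one_mul_comp_le {r : ℝ} (hr : 0 < r)
    (hw : IsHalfspaceAccurate β (fun _ => r) s w δ) {φ : ℝ → ℝ} (hφ : Monotone φ) {M : ℝ}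
    (hmem : ∀ z, φ z ∈ Set.Icc 0 M) (α : Fin d → ℝ) :
    |∑ j ∈ s, (w j - 1) * φ (β j ⬝ᵥ α)| ≤ M / r * δ := by
  have hM : 0 ≤ M := (hmem 0).1.trans (hmem 0).2
  refine hw.abs_sum_sub_one_mul_le (fun _ _ => hr) (by positivity) (fun j _ => ?_) fun t => ?_
  · rw [div_mul_cancel₀ _ hr.ne']
    exact hmem _
  · obtain ⟨τ, hτ⟩ := exists_forall_le_comp_iff_le hφ s (fun j => β j ⬝ᵥ α) (t * r)
    exact ⟨α, τ / r, fun j hj => by rw [hτ j hj, div_mul_cancel₀ _ hr.ne']⟩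

lemma abs_sum_sub_one_mul_comp_le_of_antitone {r : ℝ} (hr : 0 < r)
    (hw : IsHalfspaceAccurate β (fun _ => r) s w δ) {φ : ℝ → ℝ} (hφ : Antitone φ) {M : ℝ}
    (hmem : ∀ z, φ z ∈ Set.Icc 0 M) (α : Fin d → ℝ) :
    |∑ j ∈ s, (w j - 1) * φ (β j ⬝ᵥ α)| ≤ M / r * δ := by
  simpa using hw.abs_sum_sub_one_mul_comp_le hr (hφ.comp fun _ _ => neg_le_neg)
    (fun z => hmem (-z)) (-α)

end IsHalfspaceAccurate

end HalfspaceAccuracy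

section Sensitivities

/-- **Auerbach's lemma**. By Cramer's rule, a family of maximal volume in the unit ball works. -/
lemma exists_basis_norm_le_one_abs_repr_le_norm (E : Type*) [NormedAddCommGroup E]
    [NormedSpace ℝ E] [FiniteDimensional ℝ E] :
    ∃ b : Module.Basis (Fin (Module.finrank ℝ E)) ℝ E,
      (∀ i, ‖b i‖ ≤ 1) ∧ ∀ x i, |b.repr x i| ≤ ‖x‖ := by
  set e := Module.finBasis ℝ E
  have hcompact : IsCompact (Set.univ.pi fun _ : Fin (Module.finrank ℝ E) =>
      Metric.closedBall (0 : E) 1) := isCompact_univ_pi fun _ => isCompact_closedBall _ _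
  have hcont : Continuous fun v : Fin (Module.finrank ℝ E) → E => |e.det v| := by
    have hcoord (i) : Continuous fun x : E => e.repr x i :=
      (e.coord i).continuous_of_finiteDimensional
    simp only [Module.Basis.det_apply]
    exact (Continuous.matrix_det <| continuous_matrix fun i l =>
      (hcoord i).comp (continuous_apply l)).abs
  obtain ⟨v, hv, hmax⟩ := hcompact.exists_isMaxOn ⟨0, by simp⟩ hcont.continuousOn
  simp only [isMaxOn_iff, Set.mem_univ_pi, mem_closedBall_zero_iff] at hv hmax
  have hdet : e.det v ≠ 0 := by
    have hunit (i) : IsUnit ‖e i‖⁻¹ := by simp [e.ne_zero i]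
    have hnormalized := hmax (e.isUnitSMul hunit) fun i => by
      simp [Module.Basis.isUnitSMul_apply, norm_smul, e.ne_zero i]
    exact abs_pos.1 ((abs_pos.2 (e.isUnit_det (e.isUnitSMul hunit)).ne_zero).trans_le hnormalized)
  obtain ⟨hli, hspan⟩ := (Module.Basis.is_basis_iff_det e).2 hdet.isUnit
  set b := Module.Basis.mk hli hspan.ge
  have hcramer (x i) : e.det v * b.repr x i = e.det (Function.update v i x) :=
    LinearMap.congr_fun (e.det_smul_mk_coord_eq_det_update hli hspan.ge i) x
  have hball {x : E} (hx : ‖x‖ ≤ 1) (i) : |b.repr x i| ≤ 1 := by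
    have hupdate := hmax (Function.update v i x) fun l => by
      rcases eq_or_ne l i with rfl | hl <;> simp [*]
    rw [← hcramer, abs_mul] at hupdate
    exact le_of_mul_le_mul_left (by simpa using hupdate) (abs_pos.2 hdet)
  refine ⟨b, by simpa [b] using hv, fun x i => ?_⟩
  rcases eq_or_ne x 0 with rfl | hx
  · simp
  · have hscaled := hball (x := ‖x‖⁻¹ • x) (by simp [norm_smul, hx]) i
    simpa [abs_mul, inv_mul_le_iff₀ (norm_pos_iff.2 hx)] using hscaled

lemma exists_sensitivity_sum_le_finrank {ι : Type*} [Fintype ι] (W : Submodule ℝ (ι → ℝ)) :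
    ∃ s : ι → ℝ, (∀ j, 0 ≤ s j) ∧ ∑ j, s j ≤ Module.finrank ℝ W ∧
      ∀ f ∈ W, ∀ j, |f j| ≤ s j * ∑ i, |f i| := by
  let V : Submodule ℝ (PiLp 1 fun _ : ι => ℝ) :=
    W.comap (WithLp.linearEquiv 1 ℝ (ι → ℝ)).toLinearMap
  have hfinrank : Module.finrank ℝ V = Module.finrank ℝ W :=
    ((WithLp.linearEquiv 1 ℝ (ι → ℝ)).ofSubmodule' W).finrank_eq
  have hnorm (x : V) : ‖x‖ = ∑ j, |x.1 j| := by
    simp [PiLp.norm_eq_of_nat 1 (by norm_num : (1 : ENNReal) = (1 : ℕ))]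
  obtain ⟨b, hb, hrepr⟩ := exists_basis_norm_le_one_abs_repr_le_norm V
  refine ⟨fun j => ∑ i, |(b i).1 j|, fun j => by positivity, ?_, fun f hf j => ?_⟩
  · calc ∑ j, ∑ i, |(b i).1 j| = ∑ i, ‖b i‖ := by rw [Finset.sum_comm]; simp only [hnorm]
      _ ≤ ∑ _i : Fin (Module.finrank ℝ V), (1 : ℝ) := Finset.sum_le_sum fun i _ => hb i
      _ = Module.finrank ℝ W := by simp [hfinrank]
  · let x : V := ⟨WithLp.toLp 1 f, hf⟩
    have hx : f j = ∑ i, b.repr x i * (b i).1 j := by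
      simpa [-Module.Basis.sum_repr, x] using
        congrArg (fun y : V => y.1 j) (b.sum_repr x).symm
    calc |f j| ≤ ∑ i, |b.repr x i| * |(b i).1 j| := by
          simp only [hx, ← abs_mul]; exact Finset.abs_sum_le_sum_abs _ _
      _ ≤ ∑ i, ‖x‖ * |(b i).1 j| := by gcongr with i; exact hrepr x i
      _ = (∑ i, |(b i).1 j|) * ∑ i, |f i| := by rw [← Finset.mul_sum, mul_comm, hnorm]

lemma exists_mem_stdSimplex_abs_dotProduct_le {ι : Type*} [Fintype ι] [Nonempty ι] {d : ℕ}
    (β : ι → Fin d → ℝ) :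
    ∃ p ∈ stdSimplex ℝ ι, (∀ j, 1 / (Fintype.card ι : ℝ) ≤ (d + 1) * p j) ∧
      ∀ (α : Fin d → ℝ) (j), |β j ⬝ᵥ α| ≤ (d + 1) * p j * ∑ i, |β i ⬝ᵥ α| := by
  obtain ⟨s, hs, hsum, hsens⟩ :=
    exists_sensitivity_sum_le_finrank (Matrix.mulVecLin (Matrix.of β)).range
  have htotal : ∑ j, s j ≤ d :=
    hsum.trans (by exact_mod_cast (LinearMap.finrank_range_le _).trans_eq (by simp))
  set S := 1 + ∑ j, s j
  have hS : 0 < S := by have := Finset.sum_nonneg fun j (_ : j ∈ univ) => hs j; positivity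
  set p : ι → ℝ := fun j => (1 / Fintype.card ι + s j) / S
  have hp (j) : 0 ≤ p j := by have := hs j; positivity
  have hdom (j) : 1 / Fintype.card ι + s j ≤ (d + 1) * p j := calc
    1 / Fintype.card ι + s j = S * p j := by simp only [p]; field_simp
    _ ≤ (d + 1) * p j := mul_le_mul_of_nonneg_right (by linarith) (hp j)
  have hcard : (0 : ℝ) ≤ 1 / Fintype.card ι := by positivity
  refine ⟨p, ⟨hp, ?_⟩, fun j => ?_, fun α j => ?_⟩
  · rw [← Finset.sum_div, Finset.sum_add_distrib, div_eq_one_iff_eq hS.ne']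
    simp [S]
  · linarith [hs j, hdom j]
  · refine (hsens _ ⟨α, rfl⟩ j).trans (mul_le_mul_of_nonneg_right ?_ (by positivity))
    linarith [hs j, hdom j]

end Sensitivities

section Losses

/-- The softplus function `log (1 + exp z)`, stopped at `z = 0`. It provides the bounded monotone
pieces in the decomposition of `gfun`. -/
noncomputable def cappedSoftplus (z : ℝ) : ℝ := Real.log (1 + Real.exp (min z 0))

lemma monotone_cappedSoftplus : Monotone cappedSoftplus := fun z z' hz => by
  unfold cappedSoftplus
  gcongr

lemma cappedSoftplus_mem_Icc (z : ℝ) : cappedSoftplus z ∈ Set.Icc 0 (Real.log 2) := by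
  have hpos := Real.exp_pos (min z 0)
  have hle := Real.exp_le_one_iff.2 (min_le_right z 0)
  exact ⟨Real.log_nonneg (by linarith), Real.log_le_log (by linarith) (by linarith)⟩

lemma gfun_eq_max_add_cappedSoftplus (c z : ℝ) :
    gfun c z = max z 0 + cappedSoftplus z + cappedSoftplus (-z) -
      (Real.log 2 + Real.log (1 - c)) := by
  have hsoftplus : Real.log (1 + Real.exp z) = z + Real.log (1 + Real.exp (-z)) := by
    rw [← Real.log_exp z, ← Real.log_mul (Real.exp_ne_zero _) (by positivity), mul_add,
      ← Real.exp_add, Real.log_exp]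
    simp [add_comm]
  rcases le_total z 0 with hz | hz
  · norm_num [gfun, cappedSoftplus, hz]
    ring
  · norm_num [gfun, cappedSoftplus, hz, hsoftplus]
    ring

variable {c z : ℝ}

lemma max_zero_le_gfun (hc₀ : 0 ≤ c) (hc₁ : c ≤ 1) (z : ℝ) : max z 0 ≤ gfun c z := by
  have hlog : Real.log (1 - c) ≤ 0 := Real.log_nonpos (by linarith) (by linarith)
  have hsoftplus : max z 0 ≤ Real.log (1 + Real.exp z) := by
    refine max_le ((Real.le_log_iff_exp_le (by positivity)).2 ?_) (Real.log_nonneg ?_) <;>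
      linarith [Real.exp_pos z]
  unfold gfun
  linarith

lemma one_div_four_le_gfun (hc₀ : 0 ≤ c) (hc₁ : c ≤ 1) (hz : 0 ≤ z) : 1 / 4 ≤ gfun c z := by
  have hlog : Real.log (1 - c) ≤ 0 := Real.log_nonpos (by linarith) (by linarith)
  have hsoftplus : Real.log 2 ≤ Real.log (1 + Real.exp z) :=
    Real.log_le_log (by norm_num) (by linarith [Real.one_le_exp hz])
  unfold gfun
  linarith [Real.log_two_gt_d9]

lemma success_prob_pos (hc₀ : 0 ≤ c) (hc₁ : c < 1) (z : ℝ) :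
    0 < c + (1 - c) / (1 + Real.exp (-z)) := by
  have := sub_pos.2 hc₁
  positivity

lemma antitone_hfun (hc₀ : 0 ≤ c) (hc₁ : c < 1) : Antitone (hfun c) := fun z z' hz => by
  have := success_prob_pos hc₀ hc₁ z
  have := sub_pos.2 hc₁
  unfold hfun
  gcongr

lemma hfun_nonneg (hc₀ : 0 ≤ c) (hc₁ : c < 1) (z : ℝ) : 0 ≤ hfun c z := by
  refine neg_nonneg.2 (Real.log_nonpos (success_prob_pos hc₀ hc₁ z).le ?_)
  have : (1 - c) / (1 + Real.exp (-z)) ≤ 1 - c :=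
    div_le_self (by linarith) (by linarith [Real.exp_pos (-z)])
  linarith

lemma hfun_le_neg_log (hc₀ : 0 < c) (hc₁ : c ≤ 1) (z : ℝ) : hfun c z ≤ -Real.log c :=
  neg_le_neg (Real.log_le_log hc₀ (le_add_of_nonneg_right
    (div_nonneg (sub_nonneg.2 hc₁) (by positivity))))

lemma one_div_four_le_hfun (hc₀ : 0 ≤ c) (hc₁ : c ≤ 1 / 2) (hz : z ≤ 0) : 1 / 4 ≤ hfun c z := calc
  (1 / 4 : ℝ) ≤ -Real.log (3 / 4) := by
    linarith [Real.log_le_sub_one_of_pos (by norm_num : (0 : ℝ) < 3 / 4)]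
  _ ≤ hfun c 0 := neg_le_neg (Real.log_le_log (success_prob_pos hc₀ (by linarith) 0)
    (by norm_num; linarith))
  _ ≤ hfun c z := antitone_hfun hc₀ (by linarith) hz

end Losses

namespace IsHalfspaceAccurate

variable {ι : Type*} {d : ℕ} {β : ι → Fin d → ℝ} {p : ι → ℝ} {s : Finset ι} {w : ι → ℝ} {c δ r : ℝ}

lemma abs_sum_sub_one_mul_gfun_le (hp : ∀ j ∈ s, 0 < p j) (hwp : IsHalfspaceAccurate β p s w δ)
    (hr : 0 < r) (hwr : IsHalfspaceAccurate β (fun _ => r) s w δ) (hc₀ : 0 ≤ c) (hc₁ : c ≤ 1 / 2)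
    {α : Fin d → ℝ} {M : ℝ} (hM : 0 ≤ M) (hα : ∀ j ∈ s, |β j ⬝ᵥ α| ≤ M * p j) :
    |∑ j ∈ s, (w j - 1) * gfun c (β j ⬝ᵥ α)| ≤ (M + 3 / r) * δ := by
  have hlog2 : Real.log 2 ≤ 1 := Real.log_two_lt_d9.le.trans (by norm_num)
  have hunit {x : ℝ} (hx : x ∈ Set.Icc 0 (Real.log 2)) : x ∈ Set.Icc 0 1 :=
    Set.Icc_subset_Icc_right hlog2 hx
  have hconst : Real.log 2 + Real.log (1 - c) ∈ Set.Icc 0 (Real.log 2) := by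
    have hnonpos : Real.log (1 - c) ≤ 0 := Real.log_nonpos (by linarith) (by linarith)
    have hge : Real.log (1 / 2) ≤ Real.log (1 - c) :=
      Real.log_le_log (by norm_num) (by linarith)
    rw [one_div, Real.log_inv] at hge
    exact ⟨by linarith, by linarith⟩
  have hlinear := hwp.abs_sum_sub_one_mul_posPart_le hp hM hα
  have hmono := hwr.abs_sum_sub_one_mul_comp_le hr monotone_cappedSoftplus
    (fun z => hunit (cappedSoftplus_mem_Icc z)) α
  have hanti := hwr.abs_sum_sub_one_mul_comp_le_of_antitone hr
    (monotone_cappedSoftplus.comp_antitone fun _ _ => neg_le_neg)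
    (fun z => hunit (cappedSoftplus_mem_Icc (-z))) α
  have hoffset := hwr.abs_sum_sub_one_mul_comp_le hr monotone_const (fun _ => hunit hconst) α
  have hsplit : ∑ j ∈ s, (w j - 1) * gfun c (β j ⬝ᵥ α) =
      ∑ j ∈ s, (w j - 1) * max (β j ⬝ᵥ α) 0 + ∑ j ∈ s, (w j - 1) * cappedSoftplus (β j ⬝ᵥ α) +
        ∑ j ∈ s, (w j - 1) * cappedSoftplus (-(β j ⬝ᵥ α)) -
          ∑ j ∈ s, (w j - 1) * (Real.log 2 + Real.log (1 - c)) := by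
    simp only [gfun_eq_max_add_cappedSoftplus, ← sum_add_distrib, ← sum_sub_distrib, ← mul_add,
      ← mul_sub]
  have hbudget : (M + 3 / r) * δ = M * δ + 1 / r * δ + 1 / r * δ + 1 / r * δ := by ring
  rw [hsplit, hbudget]
  exact (abs_sub _ _).trans <| add_le_add ((abs_add_three _ _ _).trans
    (add_le_add_three hlinear hmono hanti)) hoffset

lemma abs_sum_sub_one_mul_hfun_neg_le (hr : 0 < r) (hw : IsHalfspaceAccurate β (fun _ => r) s w δ)
    (hc₀ : 0 < c) (hc₁ : c < 1) (α : Fin d → ℝ) :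
    |∑ j ∈ s, (w j - 1) * hfun c (-(β j ⬝ᵥ α))| ≤ -Real.log c / r * δ :=
  hw.abs_sum_sub_one_mul_comp_le hr ((antitone_hfun hc₀.le hc₁).comp fun _ _ => neg_le_neg)
    (fun z => ⟨hfun_nonneg hc₀.le hc₁ (-z), hfun_le_neg_log hc₀ hc₁.le (-z)⟩) α

end IsHalfspaceAccurate

section Complexity

variable {N d : ℕ} {x : Fin N → Fin d → ℝ} {s : Finset (Fin N)} {μ : ℝ}

lemma Mu0ComplexOn.card_le (h : Mu0ComplexOn x s μ) (hμ : 0 ≤ μ) (α : Fin d → ℝ) :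
    (#s : ℝ) ≤ (1 + μ) * #{j ∈ s | x j ⬝ᵥ α ≤ 0} := by
  rcases eq_or_ne α 0 with rfl | hα
  · simpa using le_mul_of_one_le_left (Nat.cast_nonneg #s) (by linarith)
  · have hsplit : (#s : ℝ) = #{j ∈ s | 0 ≤ x j ⬝ᵥ α} + #{j ∈ s | x j ⬝ᵥ α < 0} := by
      simp only [← not_le]
      exact_mod_cast (card_filter_add_card_filter_not (s := s) fun j => 0 ≤ x j ⬝ᵥ α).symm
    have hmono : (#{j ∈ s | x j ⬝ᵥ α < 0} : ℝ) ≤ #{j ∈ s | x j ⬝ᵥ α ≤ 0} := by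
      gcongr
      exact le_of_lt
    linarith [h α hα, mul_le_mul_of_nonneg_left hmono (by linarith : 0 ≤ 1 + μ)]

lemma Mu0ComplexOn.mul_card_le_sum (h : Mu0ComplexOn x s μ) (hμ : 0 ≤ μ) {φ : ℝ → ℝ} {a : ℝ}
    (ha : 0 ≤ a) (hφ : ∀ z, 0 ≤ φ z) (hφa : ∀ z ≤ 0, a ≤ φ z) (α : Fin d → ℝ) :
    a * #s ≤ (1 + μ) * ∑ j ∈ s, φ (x j ⬝ᵥ α) := calc
  a * #s ≤ a * ((1 + μ) * #{j ∈ s | x j ⬝ᵥ α ≤ 0}) := by gcongr; exact h.card_le hμ α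
  _ = (1 + μ) * ∑ j ∈ s with x j ⬝ᵥ α ≤ 0, a := by rw [sum_const, nsmul_eq_mul]; ring
  _ ≤ (1 + μ) * ∑ j ∈ s with x j ⬝ᵥ α ≤ 0, φ (x j ⬝ᵥ α) := by
    gcongr with j hj
    exact hφa _ (mem_filter.1 hj).2
  _ ≤ (1 + μ) * ∑ j ∈ s, φ (x j ⬝ᵥ α) := by
    refine mul_le_mul_of_nonneg_left ?_ (by linarith)
    exact sum_le_sum_of_subset_of_nonneg (filter_subset _ _) fun _ _ _ => hφ _

lemma Mu1ComplexOn.sum_abs_le (h : Mu1ComplexOn x s μ) (α : Fin d → ℝ) :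
    ∑ j ∈ s, |x j ⬝ᵥ α| ≤ (1 + μ) * ∑ j ∈ s, max (x j ⬝ᵥ α) 0 := by
  have hneg : ∑ j ∈ s with x j ⬝ᵥ α ≤ 0, -(x j ⬝ᵥ α) = ∑ j ∈ s, max (-(x j ⬝ᵥ α)) 0 := by
    rw [sum_filter]
    refine sum_congr rfl fun j _ => ?_
    split_ifs with hj
    · rw [max_eq_left (neg_nonneg.2 hj)]
    · rw [max_eq_right (neg_nonpos.2 (not_le.1 hj).le)]
  have hpos : ∑ j ∈ s with 0 < x j ⬝ᵥ α, |x j ⬝ᵥ α| = ∑ j ∈ s, max (x j ⬝ᵥ α) 0 := by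
    rw [sum_filter]
    refine sum_congr rfl fun j _ => ?_
    split_ifs with hj
    · rw [abs_of_pos hj, max_eq_left hj.le]
    · rw [max_eq_right (not_lt.1 hj)]
  have hcomplex := h (-α)
  simp only [dotProduct_neg, Left.nonneg_neg_iff, Left.neg_neg_iff, abs_neg, hneg, hpos]
    at hcomplex
  calc ∑ j ∈ s, |x j ⬝ᵥ α| = ∑ j ∈ s, max (x j ⬝ᵥ α) 0 + ∑ j ∈ s, max (-(x j ⬝ᵥ α)) 0 := by
        rw [← sum_add_distrib]
        exact sum_congr rfl fun j _ => (posPart_add_negPart (x j ⬝ᵥ α)).symm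
    _ ≤ (1 + μ) * ∑ j ∈ s, max (x j ⬝ᵥ α) 0 := by linarith

end Complexity

section Items

variable {n d : ℕ} {β : Fin n → Fin d → ℝ} {y w : Fin n → ℝ} {c μ : ℝ}

/-- The rows `x_j = -y_j β_jᵀ` of the design matrix of an item with labels `y`. -/
def signedRows (y : Fin n → ℝ) (β : Fin n → Fin d → ℝ) (j : Fin n) (k : Fin d) : ℝ :=
  -y j * β j k

/-- The objective `L_i(α, c)` of an item with labels `y`, with its `j`-th term weighted by `w j`;
the objective itself is the case `w = 1`. -/
noncomputable def itemLoss (y : Fin n → ℝ) (β : Fin n → Fin d → ℝ) (w : Fin n → ℝ) (c : ℝ)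
    (α : Fin d → ℝ) : ℝ :=
  ∑ j with y j = -1, w j * gfun c (signedRows y β j ⬝ᵥ α) +
    ∑ j with y j = 1, w j * hfun c (signedRows y β j ⬝ᵥ α)

/-- The complexity conditions on a single item under which its objective admits a small coreset. -/
structure IsComplexItem (μ : ℝ) (y : Fin n → ℝ) (β : Fin n → Fin d → ℝ) : Prop where
  label (j : Fin n) : y j = 1 ∨ y j = -1
  mu1ComplexOn_neg : Mu1ComplexOn (signedRows y β) {j | y j = -1} μ
  mu0ComplexOn_neg : Mu0ComplexOn (signedRows y β) {j | y j = -1} μ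
  mu0ComplexOn_pos : Mu0ComplexOn (signedRows y β) {j | y j = 1} μ
  sum_abs_pos_le (η : Fin d → ℝ) : ∑ j with y j = 1, |signedRows y β j ⬝ᵥ η| ≤
    2 * μ * ∑ j with y j = -1, |signedRows y β j ⬝ᵥ η|

lemma signedRows_dotProduct (y : Fin n → ℝ) (β : Fin n → Fin d → ℝ) (j : Fin n)
    (α : Fin d → ℝ) : signedRows y β j ⬝ᵥ α = -y j * (β j ⬝ᵥ α) :=
  smul_dotProduct (-y j) (β j) α

lemma itemLoss_eq_sum_gfun_add_sum_hfun_neg (y : Fin n → ℝ) (β : Fin n → Fin d → ℝ)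
    (w : Fin n → ℝ) (c : ℝ) (α : Fin d → ℝ) :
    itemLoss y β w c α = ∑ j with y j = -1, w j * gfun c (β j ⬝ᵥ α) +
      ∑ j with y j = 1, w j * hfun c (-(β j ⬝ᵥ α)) := by
  unfold itemLoss
  congr 1 <;> refine sum_congr rfl fun j hj => ?_ <;>
    simp [signedRows_dotProduct, (mem_filter.1 hj).2]

lemma abs_itemLoss_sub_le_of_isHalfspaceAccurate {p : Fin n → ℝ} {r δ M : ℝ} (hp : ∀ j, 0 < p j)
    (hlinear : IsHalfspaceAccurate β p {j | y j = -1} w δ) (hr : 0 < r)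
    (hneg : IsHalfspaceAccurate β (fun _ => r) {j | y j = -1} w δ)
    (hpos : IsHalfspaceAccurate β (fun _ => r) {j | y j = 1} w δ)
    (hc₀ : 0 < c) (hc₁ : c ≤ 1 / 2) {α : Fin d → ℝ} (hM : 0 ≤ M)
    (hα : ∀ j, |β j ⬝ᵥ α| ≤ M * p j) :
    |itemLoss y β w c α - itemLoss y β 1 c α| ≤ (M + (3 - Real.log c) / r) * δ := by
  have hsplit : itemLoss y β w c α - itemLoss y β 1 c α =
      ∑ j with y j = -1, (w j - 1) * gfun c (β j ⬝ᵥ α) +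
        ∑ j with y j = 1, (w j - 1) * hfun c (-(β j ⬝ᵥ α)) := by
    simp only [itemLoss_eq_sum_gfun_add_sum_hfun_neg, Pi.one_apply, sub_mul, sum_sub_distrib]
    ring
  have hg := hlinear.abs_sum_sub_one_mul_gfun_le (fun j _ => hp j) hr hneg hc₀.le hc₁ hM
    fun j _ => hα j
  have hh := hpos.abs_sum_sub_one_mul_hfun_neg_le hr hc₀ (by linarith) α
  rw [hsplit]
  calc _ ≤ (M + 3 / r) * δ + -Real.log c / r * δ := (abs_add_le _ _).trans (add_le_add hg hh)
    _ = (M + (3 - Real.log c) / r) * δ := by ring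

namespace IsComplexItem

lemma sum_univ_eq (h : IsComplexItem μ y β) (f : Fin n → ℝ) :
    ∑ j, f j = ∑ j with y j = -1, f j + ∑ j with y j = 1, f j := by
  have hpos : univ.filter (fun j => ¬y j = -1) = univ.filter fun j => y j = 1 :=
    filter_congr fun j _ => ⟨fun hj => (h.label j).resolve_right hj, fun hj => by norm_num [hj]⟩
  rw [← hpos, sum_filter_add_sum_filter_not]

lemma natCast_le_mul_itemLoss (h : IsComplexItem μ y β) (hμ : 1 ≤ μ) (hc₀ : 0 ≤ c)
    (hc₁ : c ≤ 1 / 2) (α : Fin d → ℝ) : (n : ℝ) ≤ 8 * μ * itemLoss y β 1 c α := by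
  have hg := h.mu0ComplexOn_neg.mul_card_le_sum (by linarith) (by norm_num : (0 : ℝ) ≤ 1 / 4)
    (φ := fun z => gfun c (-z))
    (fun z => (le_max_right _ _).trans (max_zero_le_gfun hc₀ (by linarith) (-z)))
    (fun z hz => one_div_four_le_gfun hc₀ (by linarith) (neg_nonneg.2 hz)) (-α)
  have hh := h.mu0ComplexOn_pos.mul_card_le_sum (by linarith) (by norm_num : (0 : ℝ) ≤ 1 / 4)
    (hfun_nonneg hc₀ (by linarith)) (fun z hz => one_div_four_le_hfun hc₀ hc₁ hz) α
  have hcard : (n : ℝ) = #{j | y j = -1} + #{j | y j = 1} := by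
    simpa using h.sum_univ_eq fun _ => 1
  have hloss : itemLoss y β 1 c α = ∑ j with y j = -1, gfun c (signedRows y β j ⬝ᵥ α) +
      ∑ j with y j = 1, hfun c (signedRows y β j ⬝ᵥ α) := by simp [itemLoss]
  simp only [dotProduct_neg, neg_neg] at hg
  have hn : (n : ℝ) ≤ 4 * (1 + μ) * itemLoss y β 1 c α := by rw [hcard, hloss]; linarith
  have hnonneg : 0 ≤ itemLoss y β 1 c α :=
    nonneg_of_mul_nonneg_right ((Nat.cast_nonneg n).trans hn) (by linarith)
  exact hn.trans (mul_le_mul_of_nonneg_right (by linarith) hnonneg)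

lemma sum_abs_le_mul_itemLoss (h : IsComplexItem μ y β) (hμ : 1 ≤ μ) (hc₀ : 0 ≤ c)
    (hc₁ : c < 1) (α : Fin d → ℝ) :
    ∑ j, |β j ⬝ᵥ α| ≤ 6 * μ ^ 2 * itemLoss y β 1 c α := by
  have habs (j) : |β j ⬝ᵥ α| = |signedRows y β j ⬝ᵥ α| := by
    rcases h.label j with hj | hj <;> simp [signedRows_dotProduct, hj]
  have hmax : ∑ j with y j = -1, max (signedRows y β j ⬝ᵥ α) 0 ≤ itemLoss y β 1 c α := by
    simp only [itemLoss, Pi.one_apply, one_mul]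
    exact le_add_of_le_of_nonneg (sum_le_sum fun _ _ => max_zero_le_gfun hc₀ hc₁.le _)
      (sum_nonneg fun _ _ => hfun_nonneg hc₀ hc₁ _)
  have hnonneg : 0 ≤ itemLoss y β 1 c α := (sum_nonneg fun _ _ => le_max_right _ _).trans hmax
  calc ∑ j, |β j ⬝ᵥ α|
      ≤ (1 + 2 * μ) * ∑ j with y j = -1, |signedRows y β j ⬝ᵥ α| := by
        simp only [habs, h.sum_univ_eq]
        linarith [h.sum_abs_pos_le α]
    _ ≤ (1 + 2 * μ) * ((1 + μ) * itemLoss y β 1 c α) := by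
        gcongr
        exact (h.mu1ComplexOn_neg.sum_abs_le α).trans (by gcongr)
    _ ≤ (3 * μ) * (2 * μ * itemLoss y β 1 c α) := by gcongr <;> linarith
    _ = 6 * μ ^ 2 * itemLoss y β 1 c α := by ring

lemma abs_itemLoss_sub_le (h : IsComplexItem μ y β) (hn : 0 < n) (hμ : 1 ≤ μ)
    {p : Fin n → ℝ} {δ K κ : ℝ} (hp : ∀ j, 0 < p j)
    (hlinear : IsHalfspaceAccurate β p {j | y j = -1} w δ)
    (hneg : IsHalfspaceAccurate β (fun _ => 1 / n) {j | y j = -1} w δ)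
    (hpos : IsHalfspaceAccurate β (fun _ => 1 / n) {j | y j = 1} w δ)
    (hδ : 0 ≤ δ) (hK : 1 ≤ K) {α : Fin d → ℝ}
    (hα : ∀ j, |β j ⬝ᵥ α| ≤ K * p j * ∑ i, |β i ⬝ᵥ α|)
    (hκ : 1 ≤ κ) (hc₀ : 1 / κ ≤ c) (hc₁ : c ≤ 1 / 2) :
    |itemLoss y β w c α - itemLoss y β 1 c α| ≤
      30 * K * μ ^ 2 * (1 + Real.log κ) * δ * itemLoss y β 1 c α := by
  have hc : 0 < c := hc₀.trans_lt' (by positivity)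
  have hlog : -Real.log c ≤ Real.log κ := by
    have := Real.log_le_log (by positivity) hc₀
    rw [one_div, Real.log_inv] at this
    linarith
  have hE : 0 ≤ Real.log κ := Real.log_nonneg hκ
  set E := Real.log κ
  set L := itemLoss y β 1 c α
  have hnL : (n : ℝ) ≤ 8 * μ * L := h.natCast_le_mul_itemLoss hμ hc.le hc₁ α
  have hL : 0 ≤ L := nonneg_of_mul_nonneg_right ((Nat.cast_nonneg n).trans hnL) (by linarith)
  have hconst : 6 * K * μ ^ 2 + 8 * (3 + E) * μ ≤ 30 * K * μ ^ 2 * (1 + E) := by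
    have hμK : μ ≤ K * μ ^ 2 := by nlinarith
    nlinarith [mul_le_mul_of_nonneg_left hμK hE]
  calc |itemLoss y β w c α - L|
      ≤ (K * ∑ i, |β i ⬝ᵥ α| + (3 - Real.log c) / (1 / n)) * δ :=
        abs_itemLoss_sub_le_of_isHalfspaceAccurate hp hlinear (by positivity) hneg hpos hc hc₁
          (by positivity) fun j => (hα j).trans_eq (by ring)
    _ ≤ (K * ∑ i, |β i ⬝ᵥ α| + (3 + E) * n) * δ := by
        rw [div_div_eq_mul_div, div_one]
        gcongr
        linarith
    _ ≤ (K * (6 * μ ^ 2 * L) + (3 + E) * (8 * μ * L)) * δ := by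
        gcongr
        exact h.sum_abs_le_mul_itemLoss hμ hc.le (by linarith) α
    _ = (6 * K * μ ^ 2 + 8 * (3 + E) * μ) * δ * L := by ring
    _ ≤ 30 * K * μ ^ 2 * (1 + E) * δ * L := by gcongr

end IsComplexItem

lemma exists_weights_isHalfspaceAccurate_items {m : ℕ} {p : Fin n → ℝ}
    (hp : p ∈ stdSimplex ℝ (Fin n)) (β : Fin n → Fin d → ℝ) (Y : Fin m → Fin n → ℝ) {K δ : ℝ}
    (hK : 1 ≤ K) (hpK : ∀ j, 1 / n ≤ K * p j) {k : ℕ} (hδ : 0 ≤ δ)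
    (hk : 6 * (d + 2) * m * n ^ (d + 1) < Real.exp (2 * k * δ ^ 2 / K ^ 2)) :
    ∃ w : Fin n → ℝ, (∀ j, 0 ≤ w j) ∧ #{j | w j ≠ 0} ≤ k ∧ ∀ i,
      IsHalfspaceAccurate β p {j | Y i j = -1} w δ ∧
        IsHalfspaceAccurate β (fun _ => 1 / n) {j | Y i j = -1} w δ ∧
          IsHalfspaceAccurate β (fun _ => 1 / n) {j | Y i j = 1} w δ := by
  obtain ⟨w, hw, hsupp, hacc⟩ := exists_weights_isHalfspaceAccurate hp β (δ := δ) (k := k)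
    (I := Fin m ⊕ Fin m ⊕ Fin m) (q := Sum.elim (fun _ => p) fun _ _ => 1 / n)
    (Sum.elim (fun i => univ.filter fun j => Y i j = -1) (Sum.elim
      (fun i => univ.filter fun j => Y i j = -1) fun i => univ.filter fun j => Y i j = 1))
    (zero_le_one.trans hK)
    (by
      rintro (i | i) j
      · exact ⟨hp.1 j, le_mul_of_one_le_left (hp.1 j) hK⟩
      · exact ⟨one_div_nonneg.2 (Nat.cast_nonneg n), hpK j⟩) hδ
    (hk.trans_eq' (by simp only [Fintype.card_sum, Fintype.card_fin]; push_cast; ring))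
  exact ⟨w, hw, hsupp, fun i => ⟨hacc (.inl i), hacc (.inr (.inl i)), hacc (.inr (.inr i))⟩⟩

end Items

section SampleSize

lemma six_mul_mul_pow_le_pow {n m : ℕ} (d : ℕ) (hn : 2 ≤ n) :
    6 * (d + 2) * m * n ^ (d + 1) ≤ (n * m) ^ (2 * d + 5) := by
  have hd : 6 * (d + 2) ≤ 2 ^ (d + 4) := by
    induction d with
    | zero => norm_num
    | succ d ih => rw [pow_add] at *; omega
  calc 6 * (d + 2) * m * n ^ (d + 1) ≤ n ^ (d + 4) * m * n ^ (d + 1) := by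
        gcongr
        exact hd.trans (Nat.pow_le_pow_left hn _)
    _ = n ^ (2 * d + 5) * m := by ring
    _ ≤ n ^ (2 * d + 5) * m ^ (2 * d + 5) := by gcongr; exact Nat.le_self_pow (by omega) m
    _ = (n * m) ^ (2 * d + 5) := (mul_pow _ _ _).symm

lemma exists_nat_lt_exp_mul_and_le {A T r : ℝ} (hr : 0 < r) (hrT : r ≤ T)
    (hA : A ≤ Real.exp T) : ∃ k : ℕ, A < Real.exp (k * r) ∧ k ≤ 2 * (T / r) := by
  have hone : 1 ≤ T / r := (one_le_div hr).2 hrT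
  refine ⟨⌊T / r⌋₊ + 1, hA.trans_lt (Real.exp_lt_exp.2 ?_), ?_⟩
  · rw [← div_lt_iff₀ hr]
    exact_mod_cast Nat.lt_floor_add_one (T / r)
  · push_cast
    linarith [Nat.floor_le (zero_le_one.trans hone)]

lemma exists_sample_size {n m : ℕ} (d : ℕ) (hn : 2 ≤ n) (hm : 1 ≤ m) {δ : ℝ} (hδ₀ : 0 < δ)
    (hδ₁ : δ ≤ 1) :
    ∃ k : ℕ, 6 * (d + 2) * m * n ^ (d + 1) < Real.exp (2 * k * δ ^ 2 / (d + 1) ^ 2) ∧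
      k ≤ (2 * d + 5) * (d + 1) ^ 2 / δ ^ 2 * Real.log (n * m) := by
  have hnm : (2 : ℝ) ≤ n * m := by exact_mod_cast hn.trans (Nat.le_mul_of_pos_right n hm)
  have hlog : 1 / 2 ≤ Real.log (n * m) :=
    (by linarith [Real.log_two_gt_d9] : 1 / 2 ≤ Real.log 2).trans
      (Real.log_le_log (by norm_num) hnm)
  have hsmall : 2 * δ ^ 2 / (d + 1) ^ 2 ≤ (2 * d + 5) * Real.log (n * m) := calc
    2 * δ ^ 2 / (d + 1) ^ 2 ≤ 2 * 1 / 1 := by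
      gcongr
      · exact pow_le_one₀ hδ₀.le hδ₁
      · exact one_le_pow₀ (by linarith [(Nat.cast_nonneg d : (0 : ℝ) ≤ d)])
    _ ≤ (2 * d + 5) * (1 / 2) := by linarith [(Nat.cast_nonneg d : (0 : ℝ) ≤ d)]
    _ ≤ (2 * d + 5) * Real.log (n * m) := by gcongr
  have hexp : 6 * (d + 2) * m * n ^ (d + 1) ≤ Real.exp ((2 * d + 5) * Real.log (n * m)) := by
    have hpow : Real.exp ((2 * d + 5) * Real.log (n * m)) = (n * m : ℝ) ^ (2 * d + 5) := by
      rw [mul_comm, Real.exp_mul, Real.exp_log (by linarith)]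
      rw [← Real.rpow_natCast]
      push_cast
      rfl
    rw [hpow]
    exact_mod_cast six_mul_mul_pow_le_pow d hn
  obtain ⟨k, hk, hle⟩ := exists_nat_lt_exp_mul_and_le (by positivity) hsmall hexp
  refine ⟨k, hk.trans_eq (by ring_nf), hle.trans_eq ?_⟩
  field_simp

lemma coreset_size_le {n m : ℕ} {κ μ ε : ℝ} (hn : 3 ≤ n) (hm : 1 ≤ m) (hκ : 1 ≤ κ) (hε₀ : 0 < ε)
    (hε₁ : ε ≤ 1) :
    (1 + Real.log κ) ^ 2 * (μ ^ 4 / ε ^ 2) * Real.log (n * m) ≤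
      (1 + Real.log κ) * κ * (μ ^ 4 * √n / ε ^ 3) * (Real.log n ^ 2 + Real.log m) := by
  have hE : 0 ≤ Real.log κ := Real.log_nonneg hκ
  have hn' : (3 : ℝ) ≤ n := by exact_mod_cast hn
  have hm' : (1 : ℝ) ≤ m := by exact_mod_cast hm
  have hκE : 1 + Real.log κ ≤ κ := by linarith [Real.log_le_sub_one_of_pos (by linarith : 0 < κ)]
  have hlogn : 1 ≤ Real.log n :=
    (Real.le_log_iff_exp_le (by linarith)).2 (by linarith [Real.exp_one_lt_d9])
  have hlog : Real.log (n * m) ≤ Real.log n ^ 2 + Real.log m := by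
    rw [Real.log_mul (by positivity) (by positivity)]
    gcongr
    exact le_self_pow₀ hlogn two_ne_zero
  have hacc : μ ^ 4 / ε ^ 2 ≤ μ ^ 4 * √n / ε ^ 3 := by
    gcongr ?_ / ?_
    · exact le_mul_of_one_le_right (by positivity) (Real.one_le_sqrt.2 (by linarith))
    · exact pow_le_pow_of_le_one hε₀.le hε₁ (by norm_num)
  have hlog₀ : 0 ≤ Real.log (n * m) := Real.log_nonneg (by nlinarith)
  rw [sq]
  gcongr

end SampleSize

theorem stmt2_general (d : ℕ) :
    ∃ C : ℝ, 0 < C ∧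
      ∀ (n m : ℕ), 2 ≤ n → 1 ≤ m →
      ∀ κ : ℝ, 1 ≤ κ →
      ∀ (β : Fin n → Fin d → ℝ) (Y : Fin m → Fin n → ℝ) (μ ε : ℝ), 1 ≤ μ → 0 < ε → ε ≤ 1 →
        (∀ i, IsComplexItem μ (Y i) β) →
        ∃ w : Fin n → ℝ, (∀ j, 0 ≤ w j) ∧
          (#{j | w j ≠ 0} : ℝ) ≤
            C * ((1 + Real.log κ) ^ 2 * (μ ^ 4 / ε ^ 2) * Real.log (n * m)) ∧
          ∀ (i : Fin m) (α : Fin d → ℝ) (c : ℝ), 1 / κ ≤ c → c ≤ 1 / 2 →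
            |itemLoss (Y i) β w c α - itemLoss (Y i) β 1 c α| ≤ ε * itemLoss (Y i) β 1 c α := by
  refine ⟨900 * (2 * d + 5) * (d + 1) ^ 4, by positivity,
    fun n m hn hm κ hκ β Y μ ε hμ hε₀ hε₁ hY => ?_⟩
  have : NeZero n := ⟨by omega⟩
  have hE : 0 ≤ Real.log κ := Real.log_nonneg hκ
  have hK : (1 : ℝ) ≤ d + 1 := by linarith [(Nat.cast_nonneg d : (0 : ℝ) ≤ d)]
  set δ := ε / (30 * (d + 1) * μ ^ 2 * (1 + Real.log κ)) with hδ
  have hδ₀ : 0 < δ := by positivity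
  have hδ₁ : δ ≤ 1 := by
    refine div_le_one_of_le₀ (hε₁.trans ?_) (by positivity)
    have := one_le_mul_of_one_le_of_one_le hK (one_le_pow₀ hμ (n := 2))
    nlinarith [mul_nonneg (zero_le_one.trans this) hE]
  obtain ⟨p, hp, hpunif, hpsens⟩ := exists_mem_stdSimplex_abs_dotProduct_le β
  simp only [Fintype.card_fin] at hpunif
  have hppos (j) : 0 < p j :=
    pos_of_mul_pos_right ((hpunif j).trans_lt' (by positivity)) (by positivity)
  obtain ⟨k, hk, hsize⟩ := exists_sample_size d hn hm hδ₀ hδ₁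
  obtain ⟨w, hw, hsupp, hacc⟩ :=
    exists_weights_isHalfspaceAccurate_items hp β Y hK hpunif hδ₀.le hk
  refine ⟨w, hw, ?_, fun i α c hc₀ hc₁ => ?_⟩
  · calc (#{j | w j ≠ 0} : ℝ) ≤ k := by exact_mod_cast hsupp
      _ ≤ _ := hsize
      _ = _ := by rw [hδ]; field_simp; ring
  · obtain ⟨hlinear, hneg, hpos⟩ := hacc i
    refine ((hY i).abs_itemLoss_sub_le (by omega) hμ hppos hlinear hneg hpos hδ₀.le hK (hpsens α)
      hκ hc₀ hc₁).trans_eq ?_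
    rw [hδ]
    field_simp

/-- Coresets for the 3PL IRT model (item-parameter subproblems, with the guessing
parameter `c ∈ [1/κ, 1/2)` quantified): one nonnegative weight vector of small support
is a `(1+ε)`-coreset simultaneously for all `m` objectives `L_i(α,c)`. Here `E = ln κ`. -/
theorem stmt2 :
    ∃ C : ℝ, 0 < C ∧
      ∀ (n m : ℕ), 3 ≤ n → 3 ≤ m →
      ∀ κ : ℝ, 4 ≤ κ →
      ∀ (β : Fin n → Fin 2 → ℝ) (Y : Fin m → Fin n → ℝ),
        (∀ i j, Y i j = 1 ∨ Y i j = -1) →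
      ∀ μ ε : ℝ, 1 ≤ μ → 0 < ε → ε < 1 / 4 →
        (∀ i : Fin m,
          Mu1ComplexOn (fun j k => -Y i j * β j k)
            (Finset.univ.filter fun j => Y i j = -1) μ ∧
          Mu0ComplexOn (fun j k => -Y i j * β j k)
            (Finset.univ.filter fun j => Y i j = -1) μ ∧
          Mu1ComplexOn (fun j k => -Y i j * β j k)
            (Finset.univ.filter fun j => Y i j = 1) μ ∧
          Mu0ComplexOn (fun j k => -Y i j * β j k)
            (Finset.univ.filter fun j => Y i j = 1) μ) →
        (∀ (i : Fin m) (η : Fin 2 → ℝ),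
          ∑ j ∈ Finset.univ.filter (fun j => Y i j = -1),
              |(fun k => -Y i j * β j k) ⬝ᵥ η| ≤
            2 * μ * ∑ j ∈ Finset.univ.filter (fun j => Y i j = 1),
              |(fun k => -Y i j * β j k) ⬝ᵥ η|) →
        (∀ (i : Fin m) (η : Fin 2 → ℝ),
          ∑ j ∈ Finset.univ.filter (fun j => Y i j = 1),
              |(fun k => -Y i j * β j k) ⬝ᵥ η| ≤
            2 * μ * ∑ j ∈ Finset.univ.filter (fun j => Y i j = -1),
              |(fun k => -Y i j * β j k) ⬝ᵥ η|) →
        ∃ w : Fin n → ℝ, (∀ j, 0 ≤ w j) ∧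
          ((Finset.univ.filter fun j => w j ≠ 0).card : ℝ) ≤
            C * (1 + Real.log κ) * κ * (μ ^ 4 * Real.sqrt n / ε ^ 3) *
              ((Real.log n) ^ 2 + Real.log m) ∧
          ∀ (i : Fin m) (α : Fin 2 → ℝ) (c : ℝ), 1 / κ ≤ c → c < 1 / 2 →
            |(∑ j ∈ Finset.univ.filter (fun j => Y i j = -1),
                  w j * gfun c ((fun k => -Y i j * β j k) ⬝ᵥ α)) +
                (∑ j ∈ Finset.univ.filter (fun j => Y i j = 1),
                  w j * hfun c ((fun k => -Y i j * β j k) ⬝ᵥ α)) -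
                ((∑ j ∈ Finset.univ.filter (fun j => Y i j = -1),
                    gfun c ((fun k => -Y i j * β j k) ⬝ᵥ α)) +
                  ∑ j ∈ Finset.univ.filter (fun j => Y i j = 1),
                    hfun c ((fun k => -Y i j * β j k) ⬝ᵥ α))| ≤
              ε * ((∑ j ∈ Finset.univ.filter (fun j => Y i j = -1),
                  gfun c ((fun k => -Y i j * β j k) ⬝ᵥ α)) +
                ∑ j ∈ Finset.univ.filter (fun j => Y i j = 1),
                  hfun c ((fun k => -Y i j * β j k) ⬝ᵥ α)) := by
  obtain ⟨C, hC, hcoreset⟩ := stmt2_general 2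
  refine ⟨C, hC, fun n m hn hm κ hκ β Y hY μ ε hμ hε₀ hε₁ hcomplex _ hbalance => ?_⟩
  obtain ⟨w, hw, hsupp, hloss⟩ := hcoreset n m (by omega) (by omega) κ (by linarith) β Y μ ε hμ hε₀
    (by linarith) fun i => ⟨hY i, (hcomplex i).1, (hcomplex i).2.1, (hcomplex i).2.2.2, hbalance i⟩
  refine ⟨w, hw, hsupp.trans ?_, fun i α c hc₀ hc₁ => ?_⟩
  · rw [mul_assoc C, mul_assoc C, mul_assoc C]
    exact mul_le_mul_of_nonneg_left
      (coreset_size_le hn (by omega) (by linarith) hε₀ (by linarith)) hC.le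
  · simp only [itemLoss, Pi.one_apply, one_mul] at hloss
    exact hloss i α c hc₀ hc₁.le
end

section
/- Let X ∈ ℝ^{n×d} with rows x_1,…,x_n be μ-complex in the ℓ₁ sense for some μ ≥ 1, and assume σ_min^{(1)}(X) := inf_{v ≠ 0} ‖Xv‖₁/‖v‖₁ > 0. Define the 2PL (logistic) loss f(Xη) = ∑_{i=1}^n ln(1+exp(x_i·η)). Let ε ∈ (0,1/2) and let η_opt, η_core ∈ ℝ^d satisfy f(X·η_core) ≤ (1+3ε)·f(X·η_opt). Then ‖η_opt − η_core‖₁ ≤ ((1+μ)·(2+3ε)/σ_min^{(1)}(X))·f(X·η_opt). -/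
/-! The logistic loss dominates the positive part, `t⁺ ≤ log (1 + exp t)`, while complexity at `-η`
bounds the negative part of `Xη` by `μ` times its positive part. Hence `‖Xη‖₁ ≤ (1 + μ) f(Xη)` for
every `η`. Thus `σ ‖η - η'‖₁ ≤ ‖Xη‖₁ + ‖Xη'‖₁ ≤ (1 + μ) (f(Xη) + f(Xη'))` for any two parameter
vectors, and the comparison of the two losses turns the right-hand side into a multiple of
`f(X ηopt)`. -/

open Finset Matrix

/-- The rows `x` are `μ`-complex in the ℓ₁ sense. -/
def Mu1Complex {n d : ℕ} (x : Fin n → Fin d → ℝ) (μ : ℝ) : Prop :=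
  ∀ η : Fin d → ℝ,
    ∑ i ∈ Finset.univ.filter (fun i => 0 ≤ x i ⬝ᵥ η), x i ⬝ᵥ η ≤
      μ * ∑ i ∈ Finset.univ.filter (fun i => x i ⬝ᵥ η < 0), |x i ⬝ᵥ η|

/-- The 2PL loss `f(y) = ∑ i, log (1 + exp (y i))` of a vector `y` of linear predictors, so that
the loss of `η` for data rows `X` is `logisticLoss fun i => X i ⬝ᵥ η`. -/
noncomputable def logisticLoss {ι : Type*} [Fintype ι] (y : ι → ℝ) : ℝ :=
  ∑ i, Real.log (1 + Real.exp (y i))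

lemma posPart_le_log_one_add_exp (t : ℝ) : t⁺ ≤ Real.log (1 + Real.exp t) := by
  have hexp : 0 < Real.exp t := Real.exp_pos t
  refine sup_le ?_ (Real.log_nonneg (by linarith))
  rw [Real.le_log_iff_exp_le (by linarith)]
  linarith

lemma sum_posPart_le_logisticLoss {ι : Type*} [Fintype ι] (y : ι → ℝ) :
    ∑ i, (y i)⁺ ≤ logisticLoss y :=
  sum_le_sum fun i _ => posPart_le_log_one_add_exp (y i)

section SignedSums

variable {ι G : Type*} [AddCommGroup G] [LinearOrder G]

lemma sum_filter_nonneg_eq_sum_posPart (s : Finset ι) (y : ι → G) :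
    ∑ i ∈ s with 0 ≤ y i, y i = ∑ i ∈ s, (y i)⁺ := by
  simp only [sum_filter, posPart_eq_ite]

lemma sum_filter_neg_abs_eq_sum_negPart [IsOrderedAddMonoid G] (s : Finset ι) (y : ι → G) :
    ∑ i ∈ s with y i < 0, |y i| = ∑ i ∈ s, (y i)⁻ := by
  rw [sum_filter]
  refine sum_congr rfl fun i _ => ?_
  rw [negPart_eq_ite_lt]
  exact ite_congr rfl abs_of_neg fun _ => rfl

end SignedSums

lemma sum_abs_dotProduct_sub_le {ι κ R : Type*} [Fintype ι] [Fintype κ]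
    [NonUnitalNonAssocRing R] [LinearOrder R] [IsOrderedAddMonoid R] (X : ι → κ → R) (v w : κ → R) :
    ∑ i, |X i ⬝ᵥ (v - w)| ≤ ∑ i, |X i ⬝ᵥ v| + ∑ i, |X i ⬝ᵥ w| := by
  rw [← sum_add_distrib]
  refine sum_le_sum fun i _ => ?_
  rw [dotProduct_sub]
  exact abs_sub _ _

lemma sInf_image_div_mul_le {α : Type*} {p q : α → ℝ} (hp : ∀ a, 0 ≤ p a) (hq : ∀ a, 0 ≤ q a)
    {s : Set α} {a : α} (ha : q a ≠ 0 → a ∈ s) :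
    sInf ((fun b => p b / q b) '' s) * q a ≤ p a := by
  rcases (hq a).eq_or_lt' with hqa | hqa
  · simpa [hqa] using hp a
  · rw [← le_div_iff₀ hqa]
    refine csInf_le ⟨0, ?_⟩ (Set.mem_image_of_mem _ (ha hqa.ne'))
    rintro _ ⟨b, -, rfl⟩
    exact div_nonneg (hp b) (hq b)

lemma sInf_sum_abs_div_mul_sum_abs_le {ι κ : Type*} [Fintype ι] [Fintype κ]
    (X : ι → κ → ℝ) (v : κ → ℝ) :
    sInf ((fun w : κ → ℝ => (∑ i, |X i ⬝ᵥ w|) / ∑ k, |w k|) '' {w | w ≠ 0}) * ∑ k, |v k| ≤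
      ∑ i, |X i ⬝ᵥ v| := by
  refine sInf_image_div_mul_le (p := fun w => ∑ i, |X i ⬝ᵥ w|) (q := fun w => ∑ k, |w k|)
    (fun w => by positivity) (fun w => by positivity) ?_
  rintro hv rfl
  simp at hv

namespace Mu1Complex

variable {n d : ℕ} {X : Fin n → Fin d → ℝ} {μ : ℝ}

lemma sum_negPart_le (hX : Mu1Complex X μ) (η : Fin d → ℝ) :
    ∑ i, (X i ⬝ᵥ η)⁻ ≤ μ * ∑ i, (X i ⬝ᵥ η)⁺ := by
  have hneg := hX (-η)
  rw [sum_filter_nonneg_eq_sum_posPart, sum_filter_neg_abs_eq_sum_negPart] at hneg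
  simpa only [dotProduct_neg, posPart_neg, negPart_neg] using hneg

lemma sum_abs_le_mul_logisticLoss (hX : Mu1Complex X μ) (hμ : 0 ≤ μ) (η : Fin d → ℝ) :
    ∑ i, |X i ⬝ᵥ η| ≤ (1 + μ) * logisticLoss fun i => X i ⬝ᵥ η :=
  calc ∑ i, |X i ⬝ᵥ η| = ∑ i, (X i ⬝ᵥ η)⁺ + ∑ i, (X i ⬝ᵥ η)⁻ := by
        simp only [← sum_add_distrib, posPart_add_negPart]
    _ ≤ ∑ i, (X i ⬝ᵥ η)⁺ + μ * ∑ i, (X i ⬝ᵥ η)⁺ := by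
        gcongr
        exact hX.sum_negPart_le η
    _ = (1 + μ) * ∑ i, (X i ⬝ᵥ η)⁺ := by ring
    _ ≤ (1 + μ) * logisticLoss fun i => X i ⬝ᵥ η := by
        gcongr
        exact sum_posPart_le_logisticLoss _

lemma mul_sum_abs_sub_le (hX : Mu1Complex X μ) (hμ : 0 ≤ μ) {σ : ℝ}
    (hσ : ∀ v : Fin d → ℝ, σ * ∑ k, |v k| ≤ ∑ i, |X i ⬝ᵥ v|) (η η' : Fin d → ℝ) :
    σ * ∑ k, |η k - η' k| ≤
      (1 + μ) * ((logisticLoss fun i => X i ⬝ᵥ η) + logisticLoss fun i => X i ⬝ᵥ η') :=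
  calc σ * ∑ k, |η k - η' k| ≤ ∑ i, |X i ⬝ᵥ (η - η')| := hσ (η - η')
    _ ≤ ∑ i, |X i ⬝ᵥ η| + ∑ i, |X i ⬝ᵥ η'| := sum_abs_dotProduct_sub_le X η η'
    _ ≤ (1 + μ) * (logisticLoss fun i => X i ⬝ᵥ η) +
          (1 + μ) * logisticLoss fun i => X i ⬝ᵥ η' :=
        add_le_add (hX.sum_abs_le_mul_logisticLoss hμ η) (hX.sum_abs_le_mul_logisticLoss hμ η')
    _ = (1 + μ) * ((logisticLoss fun i => X i ⬝ᵥ η) + logisticLoss fun i => X i ⬝ᵥ η') :=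
        (mul_add _ _ _).symm

end Mu1Complex

theorem stmt3_general {n d : ℕ} {X : Fin n → Fin d → ℝ} {μ : ℝ} (hμ : 0 ≤ μ)
    (hcomplex : Mu1Complex X μ) {σ : ℝ} (hσpos : 0 < σ)
    (hσ : ∀ v : Fin d → ℝ, σ * ∑ k, |v k| ≤ ∑ i, |X i ⬝ᵥ v|)
    {c : ℝ} {ηopt ηcore : Fin d → ℝ}
    (hcore : (logisticLoss fun i => X i ⬝ᵥ ηcore) ≤ c * logisticLoss fun i => X i ⬝ᵥ ηopt) :
    ∑ k, |ηopt k - ηcore k| ≤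
      ((1 + μ) * (1 + c) / σ) * logisticLoss fun i => X i ⬝ᵥ ηopt := by
  rw [div_mul_eq_mul_div, le_div_iff₀' hσpos]
  calc σ * ∑ k, |ηopt k - ηcore k|
      ≤ (1 + μ) * ((logisticLoss fun i => X i ⬝ᵥ ηopt) + logisticLoss fun i => X i ⬝ᵥ ηcore) :=
        hcomplex.mul_sum_abs_sub_le hμ hσ ηopt ηcore
    _ ≤ (1 + μ) * ((logisticLoss fun i => X i ⬝ᵥ ηopt) +
          c * logisticLoss fun i => X i ⬝ᵥ ηopt) := by gcongr
    _ = (1 + μ) * (1 + c) * logisticLoss fun i => X i ⬝ᵥ ηopt := by ring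

/-- Parameter recovery guarantee for the 2PL (logistic) loss: if `X` is `μ₁`-complex,
`σ = σ_min^{(1)}(X) > 0`, and the loss of `η_core` is within a `(1+3ε)` factor of
that of `η_opt`, then `‖η_opt - η_core‖₁ ≤ ((1+μ)(2+3ε)/σ)·f(X η_opt)`. -/
theorem stmt3 {n d : ℕ} (X : Fin n → Fin d → ℝ) (μ : ℝ) (hμ : 1 ≤ μ)
    (hcomplex : Mu1Complex X μ)
    (σ : ℝ)
    (hσ : σ = sInf ((fun v : Fin d → ℝ =>
      (∑ i, |X i ⬝ᵥ v|) / ∑ k, |v k|) '' {v | v ≠ 0}))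
    (hσpos : 0 < σ)
    (ε : ℝ) (hε0 : 0 < ε) (hε : ε < 1 / 2)
    (ηopt ηcore : Fin d → ℝ)
    (hcore : (∑ i, Real.log (1 + Real.exp (X i ⬝ᵥ ηcore))) ≤
      (1 + 3 * ε) * ∑ i, Real.log (1 + Real.exp (X i ⬝ᵥ ηopt))) :
    ∑ k, |ηopt k - ηcore k| ≤
      ((1 + μ) * (2 + 3 * ε) / σ) *
        ∑ i, Real.log (1 + Real.exp (X i ⬝ᵥ ηopt)) := by
  rw [show 2 + 3 * ε = 1 + (1 + 3 * ε) by ring]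
  exact stmt3_general (zero_le_one.trans hμ) hcomplex hσpos
    (hσ ▸ sInf_sum_abs_div_mul_sum_abs_le X) hcore
end
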